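/- Existence of an optimal mechanism: Let X = ∏_{i=1}^n [aᵢ, bᵢ] ⊂ ℝⁿ be a compact box with 0 ≤ aᵢ < bᵢ for each i, and let μ be a finite signed Borel measure on X with μ(X) = 0. Then the supremum sup_{u ∈ 𝒰(X) ∩ ℒ₁(X)} ∫_X u dμ is finite and is attained by some u* ∈ 𝒰(X) ∩ ℒ₁(X). -/

import Mathlib

open MeasureTheory Set

/-- ℓ¹ distance on `Fin n → ℝ`. -/
noncomputable def l1dist {n : ℕ} (x y : Fin n → ℝ) : ℝ := ∑ i, |x i - y i|

/-- The box `∏ i, [a i, b i]` in `ℝⁿ`. -/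
def box {n : ℕ} (a b : Fin n → ℝ) : Set (Fin n → ℝ) := {x | ∀ i, x i ∈ Set.Icc (a i) (b i)}

/-- `u ∈ 𝒰(X)`: continuous, coordinatewise nondecreasing and convex on `X`. -/
def memU {n : ℕ} (X : Set (Fin n → ℝ)) (u : (Fin n → ℝ) → ℝ) : Prop :=
  ContinuousOn u X ∧ (∀ x ∈ X, ∀ y ∈ X, (∀ i, x i ≤ y i) → u x ≤ u y) ∧ ConvexOn ℝ X u

/-- `u ∈ ℒ₁(X)`: 1-Lipschitz with respect to the ℓ¹ norm on `X`. -/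
def memL1 {n : ℕ} (X : Set (Fin n → ℝ)) (u : (Fin n → ℝ) → ℝ) : Prop :=
  ∀ x ∈ X, ∀ y ∈ X, u x - u y ≤ l1dist x y

/-!
Adding a constant to `u` preserves feasibility and, since `μ(X) = 0`, the objective `∫ u dμ`.
Hence one may normalize `u` to vanish at a fixed point of `X`. The normalized feasible functions
are equi-Lipschitz and pointwise bounded, and feasibility survives pointwise limits, so by
Arzelà–Ascoli they form a compact set, on which the continuous functional `u ↦ ∫ u dμ` attains
its maximum. Continuity on `X` need not be tracked, being implied by the Lipschitz bound.
-/

open scoped NNReal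

section Lipschitz

variable {X : Type*} [PseudoMetricSpace X]

lemma isCompact_setOf_lipschitzWith_apply_eq {Y : Type*} [MetricSpace Y] [ProperSpace Y]
    (K : ℝ≥0) (x₀ : X) (y₀ : Y) : IsCompact {f : C(X, Y) | LipschitzWith K f ∧ f x₀ = y₀} := by
  have himage : ContinuousMap.toFun '' {f : C(X, Y) | LipschitzWith K f ∧ f x₀ = y₀} =
      {g : X → Y | LipschitzWith K g} ∩ {g | g x₀ = y₀} := by
    ext g
    constructor
    · rintro ⟨f, hf, rfl⟩
      exact hf
    · rintro ⟨hg, hg₀⟩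
      exact ⟨⟨g, hg.continuous⟩, ⟨hg, hg₀⟩, rfl⟩
  have hclosed : IsClosed ({g : X → Y | LipschitzWith K g} ∩ {g | g x₀ = y₀}) :=
    (isClosed_setOfPred_lipschitzWith K).inter (isClosed_eq (continuous_apply x₀) continuous_const)
  have hbounded : {g : X → Y | LipschitzWith K g} ∩ {g | g x₀ = y₀} ⊆
      univ.pi fun x ↦ Metric.closedBall y₀ (K * dist x x₀) := by
    rintro g ⟨hg, rfl⟩ x -
    exact hg.dist_le_mul x x₀
  refine ArzelaAscoli.isCompact_of_equicontinuous _ ?_ ?_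
  · rw [himage]
    exact (isCompact_univ_pi fun x ↦ isCompact_closedBall _ _).of_isClosed_subset hclosed hbounded
  · exact (LipschitzWith.uniformEquicontinuous _ K fun f ↦ f.2.1).equicontinuous

theorem exists_isMaxOn_of_lipschitzWith_of_add_const {E α : Type*} [NormedAddCommGroup E]
    [ProperSpace E] [LinearOrder α] [TopologicalSpace α] [ClosedIciTopology α]
    {F : Set C(X, E)} (hne : F.Nonempty) (hclosed : IsClosed F) {K : ℝ≥0}
    (hLip : ∀ f ∈ F, LipschitzWith K f)
    (hconst : ∀ f ∈ F, ∀ c, f + ContinuousMap.const X c ∈ F)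
    {Φ : C(X, E) → α} (hΦ : Continuous Φ)
    (hΦconst : ∀ f c, Φ (f + ContinuousMap.const X c) = Φ f) :
    ∃ f ∈ F, IsMaxOn Φ F f := by
  obtain ⟨f₀, hf₀⟩ := hne
  rcases isEmpty_or_nonempty X with _ | ⟨⟨x₀⟩⟩
  · exact ⟨f₀, hf₀, fun g _ ↦ (congrArg Φ (Subsingleton.elim g f₀)).le⟩
  let F₀ : Set C(X, E) := F ∩ {f | LipschitzWith K f ∧ f x₀ = 0}
  have hcompact : IsCompact F₀ := (isCompact_setOf_lipschitzWith_apply_eq K x₀ 0).inter_left hclosed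
  have hnormalize (f) (hf : f ∈ F) : f + ContinuousMap.const X (-f x₀) ∈ F₀ :=
    ⟨hconst f hf _, hLip _ (hconst f hf _), add_neg_cancel _⟩
  obtain ⟨f, hf, hmax⟩ := hcompact.exists_isMaxOn ⟨_, hnormalize f₀ hf₀⟩ hΦ.continuousOn
  refine ⟨f, hf.1, fun g hg ↦ ?_⟩
  calc Φ g = Φ (g + ContinuousMap.const X (-g x₀)) := (hΦconst g _).symm
    _ ≤ Φ f := hmax (hnormalize g hg)

end Lipschitz

section Integral

lemma continuous_integral_continuousMap {X E : Type*} [TopologicalSpace X] [CompactSpace X]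
    [MeasurableSpace X] [BorelSpace X] [NormedAddCommGroup E] [NormedSpace ℝ E]
    [SecondCountableTopologyEither X E] (μ : Measure X) [IsFiniteMeasure μ] :
    Continuous fun f : C(X, E) ↦ ∫ x, f x ∂μ := by
  have hcomp : Continuous fun f : C(X, E) ↦ ∫ x, ContinuousMap.toLp 1 μ ℝ f x ∂μ :=
    continuous_integral.comp (ContinuousMap.toLp 1 μ ℝ).continuous
  exact hcomp.congr fun f ↦ integral_congr_ae (ContinuousMap.coeFn_toLp μ f)

lemma integral_add_const_sub_integral_add_const {Ω E : Type*} [MeasurableSpace Ω]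
    [NormedAddCommGroup E] [NormedSpace ℝ E] [CompleteSpace E] {μ ν : Measure Ω}
    [IsFiniteMeasure μ] [IsFiniteMeasure ν] (hμν : μ univ = ν univ) {f : Ω → E}
    (hμ : Integrable f μ) (hν : Integrable f ν) (c : E) :
    (∫ x, (f x + c) ∂μ) - ∫ x, (f x + c) ∂ν = (∫ x, f x ∂μ) - ∫ x, f x ∂ν := by
  have hreal : μ.real univ = ν.real univ := congrArg ENNReal.toReal hμν
  rw [integral_add hμ (integrable_const c), integral_add hν (integrable_const c),
    integral_const, integral_const, hreal, add_sub_add_right_eq_sub]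

variable {Ω : Type*} [MeasurableSpace Ω] {s : Set Ω} {μ : Measure Ω}

lemma integral_comap_subtype_of_measure_compl_eq_zero {E : Type*} [NormedAddCommGroup E]
    [NormedSpace ℝ E] (hs : MeasurableSet s) (hμ : μ sᶜ = 0) (f : Ω → E) :
    ∫ x : s, f x ∂μ.comap (↑) = ∫ x, f x ∂μ := by
  rw [integral_subtype_comap hs, Measure.restrict_eq_self_of_ae_mem (mem_ae_iff.2 hμ)]

lemma comap_subtype_univ_of_measure_compl_eq_zero (hs : MeasurableSet s) (hμ : μ sᶜ = 0) :
    μ.comap ((↑) : s → Ω) univ = μ univ := by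
  rw [comap_subtype_coe_apply hs, image_univ, Subtype.range_coe,
    measure_of_measure_compl_eq_zero hμ]

end Integral

lemma continuous_function_extend {X Y Z : Type*} [TopologicalSpace Z] (e : X → Y) (g : Y → Z) :
    Continuous fun f : X → Z ↦ Function.extend e f g := by
  classical
  refine continuous_pi fun y ↦ ?_
  by_cases hy : ∃ x, e x = y
  · simpa only [Function.extend_def, dif_pos hy] using continuous_apply _
  · simpa only [Function.extend_def, dif_neg hy] using continuous_const

section Feasible

variable {n : ℕ} {X : Set (Fin n → ℝ)} {u v : (Fin n → ℝ) → ℝ}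

lemma l1dist_comm (x y : Fin n → ℝ) : l1dist x y = l1dist y x := by
  simp only [l1dist, abs_sub_comm]

lemma l1dist_le_mul_dist (x y : Fin n → ℝ) : l1dist x y ≤ n * dist x y := by
  calc l1dist x y ≤ ∑ _i : Fin n, dist x y :=
        Finset.sum_le_sum fun i _ ↦ dist_le_pi_dist x y i
    _ = n * dist x y := by simp

lemma memL1.lipschitzOnWith (hu : memL1 X u) : LipschitzOnWith n u X := by
  refine LipschitzOnWith.of_dist_le_mul fun x hx y hy ↦ ?_
  have hl1 : |u x - u y| ≤ l1dist x y :=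
    abs_sub_le_iff.2 ⟨hu x hx y hy, (hu y hy x hx).trans_eq (l1dist_comm y x)⟩
  exact hl1.trans (l1dist_le_mul_dist x y)

lemma isClosed_setOf_memL1 (X : Set (Fin n → ℝ)) : IsClosed {u | memL1 X u} := by
  simp only [memL1, ofPred_forall]
  exact isClosed_biInter fun x _ ↦ isClosed_biInter fun y _ ↦
    isClosed_le ((continuous_apply x).sub (continuous_apply y)) continuous_const

/-- The feasible set `𝒰(X) ∩ ℒ₁(X)`, as a set of functions on all of `ℝⁿ` that are constrained
only on `X`. -/
def feasible (X : Set (Fin n → ℝ)) : Set ((Fin n → ℝ) → ℝ) := {u | memU X u ∧ memL1 X u}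

lemma mem_feasible_iff : u ∈ feasible X ↔ MonotoneOn u X ∧ ConvexOn ℝ X u ∧ memL1 X u :=
  ⟨fun ⟨⟨_, hmono, hconv⟩, hL⟩ ↦ ⟨fun x hx y hy ↦ hmono x hx y hy, hconv, hL⟩,
    fun ⟨hmono, hconv, hL⟩ ↦
      ⟨⟨hL.lipschitzOnWith.continuousOn, fun _ hx _ hy ↦ hmono hx hy, hconv⟩, hL⟩⟩

lemma isClosed_feasible (X : Set (Fin n → ℝ)) : IsClosed (feasible X) := by
  have heq : feasible X = {u | MonotoneOn u X} ∩ ({u | ConvexOn ℝ X u} ∩ {u | memL1 X u}) :=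
    ext fun _ ↦ mem_feasible_iff
  rw [heq]
  exact isClosed_monotoneOn.inter (isClosed_setOfPred_convexOn.inter (isClosed_setOf_memL1 X))

lemma zero_mem_feasible (hX : Convex ℝ X) : 0 ∈ feasible X := by
  refine mem_feasible_iff.2 ⟨monotoneOn_const, convexOn_const 0 hX, fun x _ y _ ↦ ?_⟩
  simpa [l1dist] using Finset.sum_nonneg fun i _ ↦ abs_nonneg (x i - y i)

lemma mem_feasible_of_eqOn (hu : u ∈ feasible X) (huv : EqOn u v X) : v ∈ feasible X := by
  obtain ⟨hmono, hconv, hL⟩ := mem_feasible_iff.1 hu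
  refine mem_feasible_iff.2 ⟨hmono.congr huv, hconv.congr huv, fun x hx y hy ↦ ?_⟩
  rw [← huv hx, ← huv hy]
  exact hL x hx y hy

lemma add_const_mem_feasible (hu : u ∈ feasible X) (c : ℝ) : (fun x ↦ u x + c) ∈ feasible X := by
  obtain ⟨hmono, hconv, hL⟩ := mem_feasible_iff.1 hu
  refine mem_feasible_iff.2 ⟨hmono.add_const c, hconv.add_const c, fun x hx y hy ↦ ?_⟩
  simpa only [add_sub_add_right_eq_sub] using hL x hx y hy

/-- The restrictions to `X` of the feasible functions, as a subset of `C(X, ℝ)`. A function on `X`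
is tested for feasibility through its extension by zero, since `memU` and `memL1` speak of functions
on `ℝⁿ`. -/
def feasibleRestrictions (X : Set (Fin n → ℝ)) : Set C(X, ℝ) :=
  {f | Function.extend Subtype.val f 0 ∈ feasible X}

lemma mem_feasibleRestrictions_of_eq (hu : u ∈ feasible X) {f : C(X, ℝ)}
    (hf : ∀ x : X, f x = u x) : f ∈ feasibleRestrictions X :=
  mem_feasible_of_eqOn hu fun x hx ↦
    (hf ⟨x, hx⟩).symm.trans (Subtype.val_injective.extend_apply f 0 ⟨x, hx⟩).symm

lemma isClosed_feasibleRestrictions (X : Set (Fin n → ℝ)) : IsClosed (feasibleRestrictions X) :=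
  (isClosed_feasible X).preimage ((continuous_function_extend _ 0).comp continuous_coeFun)

lemma lipschitzWith_of_mem_feasibleRestrictions {f : C(X, ℝ)} (hf : f ∈ feasibleRestrictions X) :
    LipschitzWith n f := by
  refine LipschitzWith.of_dist_le_mul fun x y ↦ ?_
  simpa only [Subtype.val_injective.extend_apply, Subtype.dist_eq] using
    hf.2.lipschitzOnWith.dist_le_mul x x.2 y y.2

lemma add_const_mem_feasibleRestrictions {f : C(X, ℝ)} (hf : f ∈ feasibleRestrictions X) (c : ℝ) :
    f + ContinuousMap.const X c ∈ feasibleRestrictions X :=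
  mem_feasibleRestrictions_of_eq (add_const_mem_feasible hf c) fun x ↦ by simp

theorem exists_isMaxOn_feasibleRestrictions (hX : IsCompact X) (hconv : Convex ℝ X)
    {μ ν : Measure X} [IsFiniteMeasure μ] [IsFiniteMeasure ν] (hμν : μ univ = ν univ) :
    ∃ f ∈ feasibleRestrictions X,
      IsMaxOn (fun f : C(X, ℝ) ↦ (∫ x, f x ∂μ) - ∫ x, f x ∂ν) (feasibleRestrictions X) f := by
  have : CompactSpace X := isCompact_iff_compactSpace.1 hX
  have hint (f : C(X, ℝ)) (m : Measure X) [IsFiniteMeasure m] : Integrable f m :=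
    (BoundedContinuousFunction.mkOfCompact f).integrable m
  refine exists_isMaxOn_of_lipschitzWith_of_add_const
    ⟨0, mem_feasibleRestrictions_of_eq (zero_mem_feasible hconv) fun _ ↦ rfl⟩
    (isClosed_feasibleRestrictions X) (fun _ ↦ lipschitzWith_of_mem_feasibleRestrictions)
    (fun _ ↦ add_const_mem_feasibleRestrictions)
    ((continuous_integral_continuousMap μ).sub (continuous_integral_continuousMap ν))
    fun f ↦ integral_add_const_sub_integral_add_const hμν (hint f μ) (hint f ν)

theorem exists_optimal_mechanism_general (hX : IsCompact X) (hconv : Convex ℝ X)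
    (μp μn : Measure (Fin n → ℝ)) [IsFiniteMeasure μp] [IsFiniteMeasure μn]
    (hμp : μp Xᶜ = 0) (hμn : μn Xᶜ = 0) (hzero : μp univ = μn univ) :
    ∃ u : (Fin n → ℝ) → ℝ, memU X u ∧ memL1 X u ∧
      ∀ v : (Fin n → ℝ) → ℝ, memU X v → memL1 X v →
        (∫ x, v x ∂μp) - (∫ x, v x ∂μn) ≤ (∫ x, u x ∂μp) - (∫ x, u x ∂μn) := by
  have hmeas : MeasurableSet X := hX.measurableSet
  have hmass : μp.comap ((↑) : X → Fin n → ℝ) univ = μn.comap ((↑) : X → Fin n → ℝ) univ := by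
    rw [comap_subtype_univ_of_measure_compl_eq_zero hmeas hμp, hzero,
      comap_subtype_univ_of_measure_compl_eq_zero hmeas hμn]
  obtain ⟨f, hf, hmax⟩ := exists_isMaxOn_feasibleRestrictions hX hconv hmass
  refine ⟨Function.extend Subtype.val f 0, hf.1, hf.2, fun v hvU hvL ↦ ?_⟩
  let g : C(X, ℝ) := ⟨fun x ↦ v x, hvU.1.domRestrict⟩
  have hg : g ∈ feasibleRestrictions X :=
    mem_feasibleRestrictions_of_eq ⟨hvU, hvL⟩ fun _ ↦ rfl
  simp only [← integral_comap_subtype_of_measure_compl_eq_zero hmeas hμp,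
    ← integral_comap_subtype_of_measure_compl_eq_zero hmeas hμn,
    Subtype.val_injective.extend_apply]
  exact hmax hg

end Feasible

lemma box_eq_Icc {n : ℕ} (a b : Fin n → ℝ) : box a b = Icc a b := by
  ext x
  simp only [box, mem_ofPred_eq, mem_Icc, Pi.le_def, forall_and]

/-- **Existence of an optimal mechanism.** For the box `X` and a finite signed Borel measure
`μ` on `X` (represented by `μp, μn` supported in `X`) with `μ(X) = 0`, the supremum of
`∫ u dμ` over `u ∈ 𝒰(X) ∩ ℒ₁(X)` is finite and attained by some `u*`: there is a feasible
`u*` whose objective value dominates that of every feasible `u` (in particular the value set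
is bounded above and its supremum is attained). -/
theorem exists_optimal_mechanism {n : ℕ} (a b : Fin n → ℝ) (hab : ∀ i, 0 ≤ a i ∧ a i < b i)
    (μp μn : Measure (Fin n → ℝ)) [IsFiniteMeasure μp] [IsFiniteMeasure μn]
    (hμp : μp (box a b)ᶜ = 0) (hμn : μn (box a b)ᶜ = 0)
    (hzero : μp Set.univ = μn Set.univ) :
    ∃ u : (Fin n → ℝ) → ℝ, memU (box a b) u ∧ memL1 (box a b) u ∧
      ∀ v : (Fin n → ℝ) → ℝ, memU (box a b) v → memL1 (box a b) v →
        (∫ x, v x ∂μp) - (∫ x, v x ∂μn) ≤ (∫ x, u x ∂μp) - (∫ x, u x ∂μn) := by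
  rw [box_eq_Icc] at *
  exact exists_optimal_mechanism_general isCompact_Icc (convex_Icc a b) μp μn hμp hμn hzero
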